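/- Let (G, ψ_0) be a graph with continuous attributes ψ_0 : V → ℝ^{q_0}, let α > 0, and let κ(x, y) = exp(−(α/2)‖x − y‖²) be the Gaussian kernel on ℝ^{q_0}. Fix k ≥ 1 and anchor points z_1, …, z_{q_1}, where each z_i = (z_i^{(1)}, …, z_i^{(k+1)}) is a sequence of k+1 vectors in ℝ^{q_0}. For 0 ≤ j ≤ k define c_j(u) ∈ ℝ^{q_1} coordinatewise by c_j(u)_i = Σ_{p ∈ W_j(G,u)} Π_{l=0}^{j} κ(ψ_0(p_l), z_i^{(k+1−j+l)}). Then for every 1 ≤ j ≤ k and every vertex u, c_j(u) = b_j(u) ⊙ Σ_{v ∈ N(u)} c_{j−1}(v), where ⊙ is the entrywise (Hadamard) product and b_j(u) ∈ ℝ^{q_1} has entries b_j(u)_i = κ(ψ_0(u), z_i^{(k+1−j)}). -/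

import Mathlib

/-!
A walk of length `m + 1` from `u` is `u` followed by a walk of length `m` from a neighbor of `u`.
In a sum over walks of a product of weights depending only on the position and the vertex visited,
the weight of the first vertex is therefore a common factor. The remaining factors of
`c_{m+1}(u)_i` are those of `c_m(v)_i`, because the anchor index `k + 1 - j + l` is unchanged when
`j` and `l` both drop by one.
-/

open Finset

/-- A walk of length `k` starting at `u`, encoded as a function `Fin (k+1) → V`
with consecutive vertices adjacent. -/
def walks {V : Type*} (G : SimpleGraph V) [Fintype V] [DecidableEq V]
    [DecidableRel G.Adj] (k : ℕ) (u : V) : Finset (Fin (k+1) → V) :=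
  Finset.univ.filter fun p => p 0 = u ∧ ∀ j : Fin k, G.Adj (p j.castSucc) (p j.succ)

open scoped Classical in
/-- The Dirac kernel. -/
noncomputable def dirac {α : Type*} (x y : α) : ℝ := if x = y then 1 else 0

/-- The walk kernel `κ_walk^{(k)}`. -/
noncomputable def walkKernel {V V' S : Type*} (G : SimpleGraph V) [Fintype V]
    [DecidableEq V] [DecidableRel G.Adj] (a : V → S)
    (G' : SimpleGraph V') [Fintype V'] [DecidableEq V'] [DecidableRel G'.Adj]
    (a' : V' → S) (k : ℕ) (u : V) (u' : V') : ℝ :=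
  ∑ p ∈ walks G k u, ∑ p' ∈ walks G' k u', dirac (a ∘ p) (a' ∘ p')

/-- The type of depth-`k` Weisfeiler-Lehman labels over an attribute set `S`. -/
def wlLabelType (S : Type u) : ℕ → Type u
  | 0 => S
  | k+1 => wlLabelType S k × Multiset (wlLabelType S k)

/-- The depth-`k` Weisfeiler-Lehman label of a vertex. -/
def wlLabel {V : Type*} {S : Type*} (G : SimpleGraph V) [Fintype V]
    [DecidableRel G.Adj] (a : V → S) : (k : ℕ) → V → wlLabelType S k
  | 0, u => a u
  | k+1, u => (wlLabel G a k u, (G.neighborFinset u).val.map (wlLabel G a k))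

/-- `R` is an exact matching of the neighborhoods of `u` and `u'`. -/
def ExactMatching {V V' S : Type*} (G : SimpleGraph V) [Fintype V]
    [DecidableRel G.Adj] (a : V → S)
    (G' : SimpleGraph V') [Fintype V'] [DecidableRel G'.Adj] (a' : V' → S)
    (u : V) (u' : V') (R : Finset (V × V')) : Prop :=
  (∀ e ∈ R, e.1 ∈ G.neighborFinset u ∧ e.2 ∈ G'.neighborFinset u') ∧
  R.card = (G.neighborFinset u).card ∧
  R.card = (G'.neighborFinset u').card ∧
  (∀ e ∈ R, ∀ f ∈ R, (e.1 = f.1 ↔ e.2 = f.2)) ∧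
  (∀ e ∈ R, a e.1 = a' e.2)

/-- The Gaussian kernel `κ(x,y) = exp(−(α/2)‖x − y‖²)` on `ℝ^{q₀}`. -/
noncomputable def gaussK {q0 : ℕ} (α : ℝ) (x y : EuclideanSpace ℝ (Fin q0)) : ℝ :=
  Real.exp (-(α/2) * ‖x - y‖^2)

/-- The `i`-th coordinate of `c_j(u)`:
`c_j(u)_i = Σ_{p ∈ W_j(G,u)} Π_{l=0}^{j} κ(ψ₀(p_l), z_i^{(k+1−j+l)})`, where
`z i : Fin (k+1) → ℝ^{q₀}` is the `i`-th anchor point (0-indexed, so the 1-indexed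
component `z_i^{(m)}` is `z i ⟨m-1, _⟩`). -/
noncomputable def cMap {V : Type*} {q0 q1 k : ℕ} (G : SimpleGraph V) [Fintype V]
    [DecidableEq V] [DecidableRel G.Adj] (ψ0 : V → EuclideanSpace ℝ (Fin q0))
    (α : ℝ) (z : Fin q1 → Fin (k+1) → EuclideanSpace ℝ (Fin q0))
    (j : ℕ) (hj : j ≤ k) (u : V) (i : Fin q1) : ℝ :=
  ∑ p ∈ walks G j u, ∏ l : Fin (j+1),
    gaussK α (ψ0 (p l)) (z i ⟨k - j + l.val, by have := l.isLt; omega⟩)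

section Walks

variable {V : Type*} [Fintype V] [DecidableEq V] {G : SimpleGraph V} [DecidableRel G.Adj]

theorem mem_walks {n : ℕ} {u : V} {p : Fin (n + 1) → V} :
    p ∈ walks G n u ↔ p 0 = u ∧ ∀ l : Fin n, G.Adj (p l.castSucc) (p l.succ) := by
  simp only [walks, mem_filter_univ]

theorem cons_mem_walks_succ {n : ℕ} {u w : V} {p : Fin (n + 1) → V} :
    (Fin.cons w p : Fin (n + 2) → V) ∈ walks G (n + 1) u ↔
      w = u ∧ G.Adj u (p 0) ∧ p ∈ walks G n (p 0) := by
  simp only [mem_walks, Fin.forall_fin_succ, Fin.cons_zero, Fin.castSucc_zero, Fin.cons_succ,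
    Fin.castSucc_succ, true_and]
  exact and_congr_right fun h => by rw [h]

variable (G)

theorem walks_succ (n : ℕ) (u : V) :
    walks G (n + 1) u =
      (G.neighborFinset u).biUnion fun v => (walks G n v).image (Fin.cons (α := fun _ => V) u) := by
  ext p
  induction p using Fin.consCases with
  | cons w p =>
    simp only [cons_mem_walks_succ, mem_biUnion, SimpleGraph.mem_neighborFinset, mem_image,
      Fin.cons_inj]
    constructor
    · rintro ⟨rfl, hadj, hp⟩
      exact ⟨p 0, hadj, p, hp, rfl, rfl⟩
    · rintro ⟨v, hadj, p, hp, rfl, rfl⟩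
      obtain rfl := (mem_walks.1 hp).1
      exact ⟨rfl, hadj, hp⟩

theorem disjoint_walks (n : ℕ) {u v : V} (huv : u ≠ v) : Disjoint (walks G n u) (walks G n v) :=
  disjoint_left.2 fun _ hu hv => huv ((mem_walks.1 hu).1.symm.trans (mem_walks.1 hv).1)

theorem sum_walks_succ {M : Type*} [AddCommMonoid M] (n : ℕ) (u : V) (f : (Fin (n + 2) → V) → M) :
    ∑ p ∈ walks G (n + 1) u, f p =
      ∑ v ∈ G.neighborFinset u, ∑ p ∈ walks G n v, f (Fin.cons u p) := by
  have cons_injective := Fin.cons_right_injective (α := fun _ : Fin (n + 2) => V) u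
  rw [walks_succ, sum_biUnion fun v _ w _ hvw =>
    (disjoint_image cons_injective).2 (disjoint_walks G n hvw)]
  exact sum_congr rfl fun v _ => sum_image cons_injective.injOn

theorem sum_walks_succ_prod {R : Type*} [CommSemiring R] (n : ℕ) (u : V)
    (w : Fin (n + 2) → V → R) :
    ∑ p ∈ walks G (n + 1) u, ∏ l, w l (p l) =
      w 0 u * ∑ v ∈ G.neighborFinset u, ∑ p ∈ walks G n v, ∏ l, w l.succ (p l) := by
  simp only [sum_walks_succ, Fin.prod_univ_succ (n := n + 1), Fin.cons_zero, Fin.cons_succ, mul_sum]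

end Walks

section WalkFeature

variable {V S T R : Type*} [Fintype V] [DecidableEq V] [CommSemiring R] {k : ℕ}
  (G : SimpleGraph V) [DecidableRel G.Adj] (κ : S → T → R) (ψ : V → S) (z : Fin (k + 1) → T)

/-- The coordinate of `c_j(u)` at a single anchor `z`, for an arbitrary kernel `κ` in place of the
Gaussian one. As in `cMap`, the paper's `z^{(m)}` is `z ⟨m - 1, _⟩`. -/
def walkFeature (j : ℕ) (hj : j ≤ k) (u : V) : R :=
  ∑ p ∈ walks G j u, ∏ l : Fin (j + 1), κ (ψ (p l)) (z ⟨k - j + l, by omega⟩)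

theorem statement8_general (j : ℕ) (hj : j + 1 ≤ k) (u : V) :
    walkFeature G κ ψ z (j + 1) hj u =
      κ (ψ u) (z ⟨k - (j + 1), by omega⟩) *
        ∑ v ∈ G.neighborFinset u, walkFeature G κ ψ z j (by omega) v := by
  have anchor_shift (l : Fin (j + 1)) : k - (j + 1) + l.succ = k - j + l := by
    rw [Fin.val_succ]
    omega
  unfold walkFeature
  rw [sum_walks_succ_prod G j u fun l x => κ (ψ x) (z ⟨k - (j + 1) + l, by omega⟩)]
  simp only [anchor_shift, Fin.val_zero, Nat.add_zero]

end WalkFeature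

/-- For every `1 ≤ j ≤ k` and every vertex `u`,
`c_j(u) = b_j(u) ⊙ Σ_{v ∈ N(u)} c_{j−1}(v)`, where `b_j(u)_i = κ(ψ₀(u), z_i^{(k+1−j)})`. -/
theorem statement8 {V : Type*} {q0 q1 k : ℕ} (G : SimpleGraph V) [Fintype V]
    [DecidableEq V] [DecidableRel G.Adj] (ψ0 : V → EuclideanSpace ℝ (Fin q0))
    (α : ℝ) (hα : 0 < α) (z : Fin q1 → Fin (k+1) → EuclideanSpace ℝ (Fin q0))
    (hk : 1 ≤ k) (j : ℕ) (hj1 : 1 ≤ j) (hj : j ≤ k) (u : V) (i : Fin q1) :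
    cMap G ψ0 α z j hj u i =
      gaussK α (ψ0 u) (z i ⟨k - j, by omega⟩) *
        ∑ v ∈ G.neighborFinset u, cMap G ψ0 α z (j-1) (by omega) v i := by
  obtain ⟨m, rfl⟩ := Nat.exists_eq_add_of_le' hj1
  exact statement8_general G (gaussK α) ψ0 (z i) m hj u
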